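/- There exists a family 𝒯 ⊆ 𝓛 with |𝒯| = 2^c such that for each τ ∈ 𝒯 the space (ℝ, τ) is a Baire space which is not regular, and for distinct τ, τ' ∈ 𝒯 the spaces (ℝ, τ) and (ℝ, τ') are not homeomorphic. -/

import Mathlib

/-!
For a filter `F` on `ℝ` let `tauF F` consist of the Euclidean open sets `U` with `0 ∈ U → U ∈ F`;
only the neighbourhoods of `0` are changed. If `F ≤ cocompact ℝ` this topology is Hausdorff, and it
is always Baire, since its dense open sets are Euclidean dense: a Euclidean open set minus `0` is
open for `tauF F`.

The filter `filt S`, for `S ⊆ ℝ`, is the supremum of two parts. The sequences `seq x`, `x ∈ S`, of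
positive integers have pairwise almost disjoint ranges, so `S` can be recovered from the topology:
the complement of the range of `seq y` is open iff `y ∉ S`. The part
`atBot ⊓ 𝓟 (ℝ \ ℤ)` destroys regularity: the negative integers form a closed set, but every closed
neighbourhood of `0` contains all sufficiently negative integers.

This gives `2 ^ 𝔠` distinct topologies. A homeomorphism from a topology `τ ⊆ η` onto a fixed
Hausdorff `τ'` is Euclidean-to-`τ'` continuous, hence determined by its values on `ℚ`, and it
determines `τ` as the induced topology. So each homeomorphism class has at most `𝔠 ^ ℵ₀ = 𝔠`
members, there are `2 ^ 𝔠` classes, and one picks a representative of each.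
-/

open Topology Set

noncomputable section

/-- The Euclidean topology on `ℝ`. -/
def eta : TopologicalSpace ℝ := inferInstance

/-- `Coarser τ₁ τ₂` means every `τ₁`-open set is `τ₂`-open, i.e. `τ₁ ⊆ τ₂`
as families of open sets. -/
def Coarser (τ₁ τ₂ : TopologicalSpace ℝ) : Prop :=
  ∀ U : Set ℝ, IsOpen[τ₁] U → IsOpen[τ₂] U

/-- The family `𝓛`: Hausdorff topologies on `ℝ` coarser than the Euclidean one. -/
def InL (τ : TopologicalSpace ℝ) : Prop :=
  Coarser τ eta ∧ @T2Space ℝ τ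

/-- `τ` is coarse at `a`: the `τ`-neighborhood filter of `a` differs from the
Euclidean one. -/
def CoarseAt (τ : TopologicalSpace ℝ) (a : ℝ) : Prop :=
  @nhds ℝ τ a ≠ @nhds ℝ eta a

/-- `C(τ)`: the set of points at which `τ` is coarse. -/
def Cset (τ : TopologicalSpace ℝ) : Set ℝ := {a | CoarseAt τ a}

/-- The family `𝓛₀`: topologies in `𝓛` with `C(τ) ⊆ {0}`. -/
def InL0 (τ : TopologicalSpace ℝ) : Prop := InL τ ∧ Cset τ ⊆ {0}

/-- `(ℝ, τ)` is completely metrizable. -/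
def CompletelyMetrizable (τ : TopologicalSpace ℝ) : Prop :=
  ∃ m : MetricSpace ℝ,
    m.toUniformSpace.toTopologicalSpace = τ ∧ @CompleteSpace ℝ m.toUniformSpace

end

open Filter

/-- The topology of Euclidean open sets which belong to `F` as soon as they contain `0`. -/
def tauF (F : Filter ℝ) : TopologicalSpace ℝ where
  IsOpen U := IsOpen U ∧ (0 ∈ U → U ∈ F)
  isOpen_univ := ⟨isOpen_univ, fun _ => univ_mem⟩
  isOpen_inter U V hU hV :=
    ⟨hU.1.inter hV.1, fun h => inter_mem (hU.2 h.1) (hV.2 h.2)⟩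
  isOpen_sUnion s hs := by
    refine ⟨isOpen_sUnion fun t ht => (hs t ht).1, ?_⟩
    rintro ⟨t, ht, h0⟩
    exact mem_of_superset ((hs t ht).2 h0) (subset_sUnion_of_mem ht)

theorem tauF_isOpen {F : Filter ℝ} {U : Set ℝ} :
    IsOpen[tauF F] U ↔ IsOpen U ∧ (0 ∈ U → U ∈ F) := Iff.rfl

theorem tauF_isOpen_diff (F : Filter ℝ) {U : Set ℝ} (hU : IsOpen U) :
    IsOpen[tauF F] (U \ {0}) :=
  tauF_isOpen.2 ⟨hU.sdiff isClosed_singleton, fun h => absurd rfl h.2⟩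

/-- Separation of `0` from a nonzero point: the latter has a compact neighbourhood, whose
complement belongs to `F`. -/
theorem tauF_sep_zero {F : Filter ℝ} (hF : F ≤ cocompact ℝ) {x : ℝ} (hx : x ≠ 0) :
    ∃ U V : Set ℝ, IsOpen[tauF F] U ∧ IsOpen[tauF F] V ∧ x ∈ U ∧ 0 ∈ V ∧ Disjoint U V := by
  have hpos : 0 < |x| / 2 := by positivity
  have h0 : (0 : ℝ) ∉ Metric.closedBall x (|x| / 2) := by
    rw [Metric.mem_closedBall, Real.dist_eq, zero_sub, abs_neg]
    linarith
  refine ⟨Metric.ball x (|x| / 2), (Metric.closedBall x (|x| / 2))ᶜ,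
    tauF_isOpen.2 ⟨Metric.isOpen_ball, fun h => absurd (Metric.ball_subset_closedBall h) h0⟩,
    tauF_isOpen.2 ⟨Metric.isClosed_closedBall.isOpen_compl,
      fun _ => hF (isCompact_closedBall x _).compl_mem_cocompact⟩,
    Metric.mem_ball_self hpos, h0, ?_⟩
  exact disjoint_compl_right.mono_left Metric.ball_subset_closedBall

theorem tauF_t2 {F : Filter ℝ} (hF : F ≤ cocompact ℝ) : @T2Space ℝ (tauF F) := by
  refine @T2Space.mk ℝ (tauF F) ?_
  intro x y hxy
  by_cases hx : x = 0
  · subst hx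
    obtain ⟨U, V, hU, hV, h1, h2, hd⟩ := tauF_sep_zero hF hxy.symm
    exact ⟨V, U, hV, hU, h2, h1, hd.symm⟩
  by_cases hy : y = 0
  · subst hy
    exact tauF_sep_zero hF hx
  obtain ⟨U, V, hU, hV, h1, h2, hd⟩ := t2_separation hxy
  exact ⟨U \ {0}, V \ {0}, tauF_isOpen_diff F hU, tauF_isOpen_diff F hV, ⟨h1, hx⟩, ⟨h2, hy⟩,
    hd.mono sdiff_subset sdiff_subset⟩

theorem tauF_inL {F : Filter ℝ} (hF : F ≤ cocompact ℝ) : InL (tauF F) :=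
  ⟨fun _ hU => hU.1, tauF_t2 hF⟩

theorem tauF_dense_iff (F : Filter ℝ) (s : Set ℝ) : @Dense ℝ (tauF F) s ↔ Dense s := by
  rw [@dense_iff_inter_open ℝ (tauF F), dense_iff_inter_open]
  constructor
  · intro h U hU hne
    -- A nonempty Euclidean open set is not contained in `{0}`.
    have hne' : (U \ {0}).Nonempty := by
      have := (dense_compl_singleton (0 : ℝ)).inter_open_nonempty U hU hne
      simpa [sdiff_eq] using this
    exact (h _ (tauF_isOpen_diff F hU) hne').mono (inter_subset_inter_left _ sdiff_subset)
  · intro h U hU hne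
    exact h U (tauF_isOpen.1 hU).1 hne

theorem tauF_baire (F : Filter ℝ) : @BaireSpace ℝ (tauF F) := by
  refine @BaireSpace.mk ℝ (tauF F) ?_
  intro f ho hd
  rw [tauF_dense_iff]
  exact dense_iInter_of_isOpen (fun n => (tauF_isOpen.1 (ho n)).1)
    (fun n => (tauF_dense_iff F _).1 (hd n))

/-- An injective code of the pairs `(n, ⌊n x⌋)` as positive integers. For `x ≠ y` the ranges of
`seq x` and `seq y` have finite intersection. -/
noncomputable def seq (x : ℝ) (n : ℕ) : ℕ := Nat.pair n (Encodable.encode ⌊(n : ℝ) * x⌋) + 1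

theorem seq_tendsto (x : ℝ) : Tendsto (fun n => (seq x n : ℝ)) atTop atTop := by
  refine tendsto_natCast_atTop_atTop.comp (tendsto_atTop_mono (fun n => ?_) tendsto_id)
  exact (Nat.left_le_pair _ _).trans (Nat.le_succ _)

theorem seq_eventually {x y : ℝ} (h : x ≠ y) : ∀ᶠ n in atTop, ∀ m, seq x n ≠ seq y m := by
  have hpos : 0 < |x - y| := abs_pos.2 (sub_ne_zero.2 h)
  obtain ⟨N, hN⟩ := exists_nat_gt (1 / |x - y|)
  filter_upwards [eventually_ge_atTop N] with n hn m he
  have he' := Nat.pair_eq_pair.1 (Nat.succ_injective he)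
  obtain ⟨rfl, he2⟩ := he'
  have h1 := Int.abs_sub_lt_one_of_floor_eq_floor (Encodable.encode_injective he2)
  rw [← mul_sub, abs_mul, Nat.abs_cast] at h1
  have h2 : (N : ℝ) ≤ n := by exact_mod_cast hn
  rw [div_lt_iff₀ hpos] at hN
  nlinarith

/-- The filter of sets which contain almost all terms of `seq x` for every `x ∈ S`, and all
sufficiently negative non-integers. -/
noncomputable def filt (S : Set ℝ) : Filter ℝ :=
  (⨆ x ∈ S, map (fun n => (seq x n : ℝ)) atTop) ⊔
    (atBot ⊓ 𝓟 (range ((↑) : ℤ → ℝ))ᶜ)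

theorem mem_filt {S U : Set ℝ} : U ∈ filt S ↔
    (∀ x ∈ S, ∀ᶠ n in atTop, (seq x n : ℝ) ∈ U) ∧
      ∃ M : ℝ, ∀ t ≤ M, t ∉ range ((↑) : ℤ → ℝ) → t ∈ U := by
  simp only [filt, mem_sup, mem_iSup, mem_map, mem_inf_principal, mem_atBot_sets]
  rfl

theorem filt_le (S : Set ℝ) : filt S ≤ cocompact ℝ := by
  refine sup_le (iSup₂_le fun x _ => ?_) (inf_le_left.trans atBot_le_cocompact)
  exact (seq_tendsto x).trans atTop_le_cocompact

theorem isClosed_intCast_image (A : Set ℤ) : IsClosed (((↑) : ℤ → ℝ) '' A) :=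
  Int.isClosedEmbedding_coe_real.isClosedMap A (isClosed_discrete A)

theorem filt_not_regular (S : Set ℝ) : ¬ @RegularSpace ℝ (tauF (filt S)) := by
  intro hreg
  set C : Set ℝ := ((↑) : ℤ → ℝ) '' Iio 0 with hC
  have h0 : (0 : ℝ) ∈ Cᶜ := by
    rintro ⟨k, hk, hk0⟩
    have : k = 0 := by exact_mod_cast hk0
    exact (ne_of_lt hk) this
  have hCo : IsOpen[tauF (filt S)] Cᶜ := by
    refine tauF_isOpen.2 ⟨(isClosed_intCast_image _).isOpen_compl, fun _ => mem_filt.2 ⟨?_, 0, ?_⟩⟩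
    · refine fun x _ => Eventually.of_forall fun n => ?_
      rintro ⟨k, hk, hk0⟩
      have h1 : (k : ℝ) < 0 := by exact_mod_cast hk
      have h2 : (0 : ℝ) ≤ seq x n := Nat.cast_nonneg _
      linarith
    · rintro t _ ht ⟨k, _, rfl⟩
      exact ht ⟨k, rfl⟩
  have hnhds : Cᶜ ∈ @nhds ℝ (tauF (filt S)) 0 := 
    @IsOpen.mem_nhds ℝ (tauF (filt S)) _ _ hCo h0
  obtain ⟨K, hK, hKc, hKC⟩ := @exists_mem_nhds_isClosed_subset ℝ (tauF (filt S)) hreg _ _ hnhds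
  obtain ⟨V, hVK, hV, hV0⟩ := (@mem_nhds_iff ℝ (tauF (filt S)) _ _).1 hK
  obtain ⟨-, M, hM⟩ := mem_filt.1 ((tauF_isOpen.1 hV).2 hV0)
  have hKc' : IsClosed K :=
    isOpen_compl_iff.1 (tauF_isOpen.1 (hKc.isOpen_compl (X := ℝ))).1
  -- The non-integers below `M` are dense in the half-line, so `K` contains the integers there.
  have hd : Dense (range ((↑) : ℤ → ℝ))ᶜ := (countable_range _).dense_compl ℝ
  have hsub : Iio M ⊆ K :=
    (hd.open_subset_closure_inter isOpen_Iio).trans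
      (closure_minimal (fun t ht => hVK (hM t ht.1.le ht.2)) hKc')
  obtain ⟨k, hk⟩ := exists_int_lt (min M 0)
  have hk1 := hk.trans_le (min_le_left _ _)
  have hk2 := hk.trans_le (min_le_right _ _)
  exact hKC (hsub hk1) ⟨k, by exact_mod_cast hk2, rfl⟩

/-- The complement of the range of `seq y` is open in the topology of `T` iff `y ∉ T`. -/
theorem isOpen_compl_seq_iff (T : Set ℝ) (y : ℝ) :
    IsOpen[tauF (filt T)] (range fun n => (seq y n : ℝ))ᶜ ↔ y ∉ T := by
  have h0 : (0 : ℝ) ∈ (range fun n => (seq y n : ℝ))ᶜ := by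
    rintro ⟨n, hn⟩
    have hn' : seq y n = 0 := by simpa using hn
    exact Nat.succ_ne_zero _ hn'
  constructor
  · intro h hy
    obtain ⟨n, hn⟩ := ((mem_filt.1 ((tauF_isOpen.1 h).2 h0)).1 y hy).exists
    exact hn ⟨n, rfl⟩
  · intro hy
    refine tauF_isOpen.2 ⟨?_, fun _ => mem_filt.2 ⟨fun x hx => ?_, 0, ?_⟩⟩
    · have := isClosed_intCast_image (range fun n => (seq y n : ℤ))
      rw [← range_comp] at this
      simpa [Function.comp_def] using this.isOpen_compl
    · have hne : x ≠ y := fun h => hy (h ▸ hx)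
      filter_upwards [seq_eventually hne] with n hn
      rintro ⟨m, hm⟩
      exact hn m (Nat.cast_injective (R := ℝ) hm.symm)
    · rintro t _ ht ⟨n, rfl⟩
      exact ht ⟨seq y n, by simp⟩

theorem tauF_filt_injective : Function.Injective fun S => tauF (filt S) := by
  intro S T h
  ext y
  rw [← not_iff_not, ← isOpen_compl_seq_iff, ← isOpen_compl_seq_iff]
  exact iff_of_eq (congrArg (fun τ => IsOpen[τ] _) h)

theorem exists_eq_induced {τ₁ τ : TopologicalSpace ℝ} (h : Nonempty (@Homeomorph ℝ ℝ τ₁ τ)) :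
    ∃ f : ℝ → ℝ, τ₁ = TopologicalSpace.induced f τ := by
  obtain ⟨g⟩ := h
  exact ⟨_, @IsInducing.eq_induced ℝ ℝ τ₁ τ _ (@Homeomorph.isInducing ℝ ℝ τ₁ τ g)⟩

theorem denseRange_ratCast_eta : @DenseRange ℝ eta ℚ (fun q => (q : ℝ)) := by
  have h : DenseRange (fun q : ℚ => (q : ℝ)) := Rat.denseRange_cast
  exact h

/-- A map inducing, from a fixed Hausdorff topology, a topology coarser than the Euclidean one is
determined by its values on `ℚ`; hence so is the induced topology. -/
theorem topology_eq_of_induced {τ₁ τ₂ τ : TopologicalSpace ℝ} (h₁ : Coarser τ₁ eta)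
    (h₂ : Coarser τ₂ eta) (hτ : @T2Space ℝ τ) {f₁ f₂ : ℝ → ℝ}
    (i₁ : τ₁ = TopologicalSpace.induced f₁ τ) (i₂ : τ₂ = TopologicalSpace.induced f₂ τ)
    (hf : ∀ q : ℚ, f₁ q = f₂ q) : τ₁ = τ₂ := by
  have c₁ : @Continuous ℝ ℝ eta τ f₁ := continuous_iff_le_induced.2 (i₁ ▸ h₁)
  have c₂ : @Continuous ℝ ℝ eta τ f₂ := continuous_iff_le_induced.2 (i₂ ▸ h₂)
  have he : f₁ = f₂ :=
    @DenseRange.equalizer ℚ ℝ ℝ eta τ hτ _ denseRange_ratCast_eta _ _ c₁ c₂ (funext hf)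
  rw [i₁, i₂, he]

/-- Homeomorphism of the associated topologies, as an equivalence relation on the parameters. -/
def homeoSetoid : Setoid (Set ℝ) where
  r S T := Nonempty (@Homeomorph ℝ ℝ (tauF (filt S)) (tauF (filt T)))
  iseqv :=
    { refl := fun S => ⟨@Homeomorph.refl ℝ (tauF (filt S))⟩
      symm := fun {S T} ⟨g⟩ => ⟨@Homeomorph.symm ℝ ℝ (tauF (filt S)) (tauF (filt T)) g⟩
      trans := fun {S T R} ⟨g⟩ ⟨h⟩ =>
        ⟨@Homeomorph.trans ℝ ℝ ℝ (tauF (filt S)) (tauF (filt T)) (tauF (filt R)) g h⟩ }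

theorem mk_quotient_homeoSetoid :
    Cardinal.mk (Quotient homeoSetoid) = 2 ^ Cardinal.continuum := by
  have hset : Cardinal.mk (Set ℝ) = 2 ^ Cardinal.continuum := by
    rw [Cardinal.mk_set, Cardinal.mk_real]
  have hfun : Cardinal.mk (ℚ → ℝ) = Cardinal.continuum := by
    simp [Cardinal.mk_real]
  refine le_antisymm (hset ▸ Cardinal.mk_quotient_le) ?_
  have hg : ∀ S : Set ℝ, ∃ f : ℝ → ℝ, tauF (filt S) = TopologicalSpace.induced f
      (tauF (filt (Quotient.out (Quotient.mk homeoSetoid S)))) := fun S =>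
    exists_eq_induced (homeoSetoid.symm (Quotient.mk_out (s := homeoSetoid) S))
  choose g hg using hg
  let Φ : Set ℝ → Quotient homeoSetoid × (ℚ → ℝ) := fun S =>
    (Quotient.mk homeoSetoid S, fun q => g S q)
  have hΦ : Function.Injective Φ := by
    intro S T h
    have h1 : Quotient.mk homeoSetoid S = Quotient.mk homeoSetoid T := congrArg Prod.fst h
    have h2 : ∀ q : ℚ, g S q = g T q := fun q => congrFun (congrArg Prod.snd h) q
    have hS := hg S
    rw [h1] at hS
    exact tauF_filt_injective (topology_eq_of_induced (tauF_inL (filt_le S)).1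
      (tauF_inL (filt_le T)).1 (tauF_t2 (filt_le _)) hS (hg T) h2)
  have hle := Cardinal.mk_le_of_injective hΦ
  rw [hset, Cardinal.mk_prod, Cardinal.lift_id, Cardinal.lift_id, hfun] at hle
  by_contra hlt
  rw [not_le] at hlt
  have hc : Cardinal.continuum < 2 ^ Cardinal.continuum := Cardinal.cantor _
  exact absurd hle (not_le.2 (Cardinal.mul_lt_of_lt
    (Cardinal.aleph0_le_continuum.trans hc.le) hlt hc))

/-- There are 2^𝔠 mutually non-homeomorphic τ ∈ 𝓛 such that
(ℝ, τ) is a Baire space which is not regular. -/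
theorem statement_7 :
    ∃ 𝒯 : Set (TopologicalSpace ℝ),
      Cardinal.mk ↥𝒯 = 2 ^ Cardinal.continuum ∧
      (∀ τ ∈ 𝒯, InL τ ∧ @BaireSpace ℝ τ ∧ ¬ @RegularSpace ℝ τ) ∧
      ∀ τ ∈ 𝒯, ∀ τ' ∈ 𝒯, τ ≠ τ' → IsEmpty (@Homeomorph ℝ ℝ τ τ') := by
  refine ⟨range fun Q : Quotient homeoSetoid => tauF (filt Q.out), ?_, ?_, ?_⟩
  · have hinj : Function.Injective fun Q : Quotient homeoSetoid => tauF (filt Q.out) :=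
      tauF_filt_injective.comp Quotient.out_injective
    rw [Cardinal.mk_range_eq _ hinj, mk_quotient_homeoSetoid]
  · rintro _ ⟨Q, rfl⟩
    exact ⟨tauF_inL (filt_le _), tauF_baire _, filt_not_regular _⟩
  · rintro _ ⟨Q, rfl⟩ _ ⟨R, rfl⟩ hne
    refine ⟨fun e => hne ?_⟩
    have hQR : Q = R := Quotient.out_equiv_out.1 ⟨e⟩
    rw [hQR]
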